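/- Let h ∼ N(0, I_p) be a standard Gaussian vector, let β⁽ᵖ⁾ ∈ ℝᵖ be a converging sequence with (1/p)‖β⁽ᵖ⁾‖² → E[β²] < ∞, and let λ⁽ᵖ⁾ ∈ ℝᵖ be a converging sequence with nonnegative nondecreasing entries and (1/p)‖λ⁽ᵖ⁾‖² → E[λ²] < ∞. Then for all c ∈ ℝ and τ > 0: (i) the deterministic sequence F_p(c,τ) = (1/p)·E[ e_{J_{λ⁽ᵖ⁾}}(c·h + β⁽ᵖ⁾; τ) − J_{λ⁽ᵖ⁾}(β⁽ᵖ⁾) ] converges as p → ∞ to a finite limit F(c,τ); and (ii) the random variables (1/p)·[ e_{J_{λ⁽ᵖ⁾}}(c·h + β⁽ᵖ⁾; τ) − J_{λ⁽ᵖ⁾}(β⁽ᵖ⁾) ] converge in probability to F(c,τ) as p → ∞. -/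

import Mathlib

open MeasureTheory Filter Finset Topology ProbabilityTheory

/-- The nondecreasing rearrangement of the absolute values of the entries of `x`. -/
noncomputable def sortedAbs {p : ℕ} (x : Fin p → ℝ) : Fin p → ℝ :=
  fun i => |x (Tuple.sort (fun j => |x j|) i)|

/-- The sorted ℓ1 norm `J_λ(x) = ∑ λ_i |x|_(i)`. -/
noncomputable def sortedL1 {p : ℕ} (lam x : Fin p → ℝ) : ℝ :=
  ∑ i, lam i * sortedAbs x i

/-- The Moreau envelope `e_{J_λ}(x; τ) = min_v (1/(2τ))‖x − v‖² + J_λ(v)`. -/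
noncomputable def moreauJ {p : ℕ} (lam x : Fin p → ℝ) (τ : ℝ) : ℝ :=
  ⨅ v : Fin p → ℝ, ((1 / (2 * τ)) * ∑ i, (x i - v i) ^ 2 + sortedL1 lam v)

/-- The standard Gaussian measure `N(0, I_p)` on `ℝᵖ`. -/
noncomputable def gaussPi (p : ℕ) : Measure (Fin p → ℝ) :=
  Measure.pi fun _ => gaussianReal 0 1

/-- The empirical measures `(1/p) ∑ δ_{x_i}` of the sequence of vectors `x⁽ᵖ⁾` converge
weakly to the probability measure `μ` (tested against bounded continuous functions). -/
def EmpConverges (x : (p : ℕ) → Fin p → ℝ) (μ : Measure ℝ) : Prop :=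
  ∀ f : BoundedContinuousFunction ℝ ℝ,
    Tendsto (fun p => (∑ i, f (x p i)) / (p : ℝ)) atTop (𝓝 (∫ t, f t ∂μ))

/-!
Embed `ℝᵖ` into `L²(0, 1)` by step functions with `p` equal steps. By the rearrangement
inequality, and because averaging over the steps preserves monotonicity and contracts distances,
`moreauJ lam x τ / p` is the Moreau envelope, over the cone of nonnegative monotone functions, of
the linear functional `⟪l, ·⟫` at the step function of `sortedAbs x`, where `l` is the step
function of `lam`; this envelope is a continuous function of the two elements of `L²`.
If the empirical measures and the second moments of a sequence of vectors converge, then the step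
functions of its sorted absolute values converge in `L²` to the quantile function of the limit law
of the absolute values. This applies to `lam p`, to `β p` and, in mean, to the noisy vectors
`c * h + β p`, whose limit law is the convolution of `μβ` with the law of `c * h`. Hence the
normalised envelopes converge in mean, which contains both claims.
-/

/-! ### Convergence in mean along varying probability spaces -/

section TendstoInMean

variable {ι : Type*} {l : Filter ι} {Ω : ι → Type*} [∀ i, MeasurableSpace (Ω i)]
  {P : ∀ i, Measure (Ω i)} {Z : ∀ i, Ω i → ℝ} {a : ℝ}

/-- Convergence in mean, along `l`, of integrable random variables `Z i`, each living on its own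
measure space, to a deterministic limit `a`. -/
structure TendstoInMean (P : ∀ i, Measure (Ω i)) (Z : ∀ i, Ω i → ℝ) (l : Filter ι) (a : ℝ) :
    Prop where
  eventually_integrable : ∀ᶠ i in l, Integrable (Z i) (P i)
  tendsto_integral_abs_sub : Tendsto (fun i => ∫ ω, |Z i ω - a| ∂P i) l (𝓝 0)

lemma integral_abs_le_sqrt_integral_sq {α : Type*} [MeasurableSpace α] {μ : Measure α}
    [IsProbabilityMeasure μ] {Y : α → ℝ} (hY : MemLp Y 2 μ) :
    ∫ ω, |Y ω| ∂μ ≤ √(∫ ω, Y ω ^ 2 ∂μ) := by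
  have h := variance_nonneg |Y| μ
  rw [variance_eq_sub hY.abs] at h
  refine Real.le_sqrt_of_sq_le ?_
  simpa only [Pi.pow_apply, Pi.abs_apply, sq_abs, sub_nonneg] using h

namespace TendstoInMean

lemma of_eventually_le {r : ι → ℝ}
    (hZ : ∀ᶠ i in l, Integrable (Z i) (P i)) (hr : Tendsto r l (𝓝 0))
    (hle : ∀ᶠ i in l, ∫ ω, |Z i ω - a| ∂P i ≤ r i) : TendstoInMean P Z l a :=
  ⟨hZ, squeeze_zero' (.of_forall fun _ => integral_nonneg fun _ => abs_nonneg _) hle hr⟩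

lemma congr {Z' : ∀ i, Ω i → ℝ} (hZ : TendstoInMean P Z l a)
    (hZZ' : ∀ᶠ i in l, ∀ ω, Z i ω = Z' i ω) : TendstoInMean P Z' l a := by
  have hfun : ∀ᶠ i in l, Z i = Z' i := hZZ'.mono fun _ => funext
  refine ⟨?_, hZ.tendsto_integral_abs_sub.congr' ?_⟩
  · filter_upwards [hZ.eventually_integrable, hfun] with i hi hii using hii ▸ hi
  · filter_upwards [hfun] with i hii using by rw [hii]

variable [∀ i, IsProbabilityMeasure (P i)]

lemma sub_deterministic (hZ : TendstoInMean P Z l a) {z : ι → ℝ} {b : ℝ}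
    (hz : Tendsto z l (𝓝 b)) : TendstoInMean P (fun i ω => Z i ω - z i) l (a - b) := by
  have hr : Tendsto (fun i => ∫ ω, |Z i ω - a| ∂P i + |z i - b|) l (𝓝 0) := by
    simpa using hZ.tendsto_integral_abs_sub.add (hz.sub_const b).abs
  refine of_eventually_le ?_ hr ?_
  · filter_upwards [hZ.eventually_integrable] with i hi using hi.sub (integrable_const _)
  filter_upwards [hZ.eventually_integrable] with i hi
  have habs : Integrable (fun ω => |Z i ω - a|) (P i) := (hi.sub (integrable_const a)).abs
  calc ∫ ω, |Z i ω - z i - (a - b)| ∂P i ≤ ∫ ω, (|Z i ω - a| + |z i - b|) ∂P i := by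
        refine integral_mono ((hi.sub (integrable_const _)).sub (integrable_const _)).abs
          (habs.add (integrable_const _)) fun ω => ?_
        rw [sub_sub_sub_comm]
        exact abs_sub _ _
    _ = ∫ ω, |Z i ω - a| ∂P i + |z i - b| := by
        rw [integral_add habs (integrable_const _), integral_const, probReal_univ, one_smul]

lemma tendsto_integral (hZ : TendstoInMean P Z l a) :
    Tendsto (fun i => ∫ ω, Z i ω ∂P i) l (𝓝 a) := by
  rw [tendsto_iff_norm_sub_tendsto_zero]
  refine squeeze_zero' (.of_forall fun _ => norm_nonneg _) ?_ hZ.tendsto_integral_abs_sub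
  filter_upwards [hZ.eventually_integrable] with i hi
  have hsub : ∫ ω, Z i ω ∂P i - a = ∫ ω, (Z i ω - a) ∂P i := by
    rw [integral_sub hi (integrable_const a), integral_const, probReal_univ, one_smul]
  rw [hsub, Real.norm_eq_abs]
  exact abs_integral_le_integral_abs

lemma tendsto_measure_le_abs_sub (hZ : TendstoInMean P Z l a) {ε : ℝ} (hε : 0 < ε) :
    Tendsto (fun i => P i {ω | ε ≤ |Z i ω - a|}) l (𝓝 0) := by
  rw [← ENNReal.tendsto_toReal_zero_iff fun _ => measure_ne_top _ _]
  refine squeeze_zero' (.of_forall fun _ => ENNReal.toReal_nonneg) ?_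
    (by simpa using hZ.tendsto_integral_abs_sub.div_const ε)
  filter_upwards [hZ.eventually_integrable] with i hi
  rw [le_div_iff₀' hε]
  exact mul_meas_ge_le_integral_of_nonneg (.of_forall fun _ => abs_nonneg _)
    (hi.sub (integrable_const a)).abs ε

end TendstoInMean

end TendstoInMean

/-! ### Sorted absolute values -/

section SortedAbs

variable {p : ℕ}

lemma sortedAbs_nonneg (x : Fin p → ℝ) (i : Fin p) : 0 ≤ sortedAbs x i := abs_nonneg _

lemma monotone_sortedAbs (x : Fin p → ℝ) : Monotone (sortedAbs x) :=
  Tuple.monotone_sort fun j => |x j|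

lemma sum_comp_sortedAbs (g : ℝ → ℝ) (x : Fin p → ℝ) :
    ∑ i, g (sortedAbs x i) = ∑ i, g |x i| :=
  Equiv.sum_comp (Tuple.sort fun j => |x j|) fun i => g |x i|

lemma sum_sortedAbs_sq (x : Fin p → ℝ) : ∑ i, sortedAbs x i ^ 2 = ∑ i, x i ^ 2 :=
  (sum_comp_sortedAbs (· ^ 2) x).trans (sum_congr rfl fun _ _ => sq_abs _)

lemma sortedAbs_eq_of_abs_eq_comp_perm {w v : Fin p → ℝ} (σ : Equiv.Perm (Fin p))
    (hv : Monotone v) (hw : ∀ i, |w i| = v (σ i)) : sortedAbs w = v := by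
  have habs : (fun j => |w j|) = v ∘ σ := funext hw
  have hsort : sortedAbs w = (v ∘ σ) ∘ Tuple.sort (v ∘ σ) := by
    rw [← habs]
    rfl
  rw [hsort, Tuple.comp_perm_comp_sort_eq_comp_sort, Tuple.sort_eq_refl_iff_monotone.2 hv]
  rfl

lemma sortedAbs_eq_self {v : Fin p → ℝ} (hv : Monotone v) (hv0 : ∀ i, 0 ≤ v i) :
    sortedAbs v = v :=
  sortedAbs_eq_of_abs_eq_comp_perm 1 hv fun i => abs_of_nonneg (hv0 i)

lemma sum_mul_le_sum_sortedAbs_mul (x y : Fin p → ℝ) :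
    ∑ i, x i * y i ≤ ∑ i, sortedAbs x i * sortedAbs y i := by
  set σ := Tuple.sort fun j => |x j| with hσ
  set ρ := Tuple.sort fun j => |y j| with hρ
  calc ∑ i, x i * y i ≤ ∑ i, |x i| * |y i| :=
        sum_le_sum fun i _ => (le_abs_self _).trans_eq (abs_mul _ _)
    _ = ∑ i, |x (σ i)| * |y (σ i)| := (Equiv.sum_comp σ fun i => |x i| * |y i|).symm
    _ = ∑ i, sortedAbs x i * sortedAbs y ((σ.trans ρ.symm) i) := by
        simp only [sortedAbs, ← hσ, ← hρ, Equiv.trans_apply, Equiv.apply_symm_apply]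
    _ ≤ ∑ i, sortedAbs x i * sortedAbs y i :=
        ((monotone_sortedAbs x).monovary (monotone_sortedAbs y)).sum_mul_comp_perm_le_sum_mul

lemma sum_sq_sortedAbs_sub_le (x y : Fin p → ℝ) :
    ∑ i, (sortedAbs x i - sortedAbs y i) ^ 2 ≤ ∑ i, (x i - y i) ^ 2 := by
  simp only [sub_sq, sum_add_distrib, sum_sub_distrib, mul_assoc, ← mul_sum, sum_sortedAbs_sq]
  linarith [sum_mul_le_sum_sortedAbs_mul x y]

lemma exists_sortedAbs_eq_sum_sq_sub_eq (x : Fin p → ℝ) {w : Fin p → ℝ} (hw : Monotone w)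
    (hw0 : ∀ i, 0 ≤ w i) :
    ∃ y, sortedAbs y = w ∧ ∑ i, (x i - y i) ^ 2 = ∑ i, (sortedAbs x i - w i) ^ 2 := by
  set σ := Tuple.sort fun j => |x j| with hσ
  refine ⟨fun i => if 0 ≤ x i then w (σ.symm i) else -w (σ.symm i),
    sortedAbs_eq_of_abs_eq_comp_perm σ.symm hw fun i => ?_, ?_⟩
  · split_ifs
    · exact abs_of_nonneg (hw0 _)
    · rw [abs_neg, abs_of_nonneg (hw0 _)]
  rw [← Equiv.sum_comp σ]
  refine sum_congr rfl fun i _ => ?_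
  simp only [sortedAbs, ← hσ, Equiv.symm_apply_apply]
  split_ifs with h
  · rw [abs_of_nonneg h]
  · rw [abs_of_neg (not_le.1 h)]
    ring

lemma continuous_sortedAbs : Continuous (sortedAbs : (Fin p → ℝ) → Fin p → ℝ) := by
  refine continuous_pi fun i => continuous_iff_continuousAt.2 fun x => ?_
  have hlim : Tendsto (fun y : Fin p → ℝ => √(∑ j, (y j - x j) ^ 2)) (𝓝 x) (𝓝 0) := by
    have hcont : Continuous fun y : Fin p → ℝ => √(∑ j, (y j - x j) ^ 2) := by fun_prop
    simpa using hcont.tendsto x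
  refine tendsto_iff_dist_tendsto_zero.2
    (squeeze_zero (fun _ => dist_nonneg) (fun y => Real.le_sqrt_of_sq_le ?_) hlim)
  calc dist (sortedAbs y i) (sortedAbs x i) ^ 2
      = (sortedAbs y i - sortedAbs x i) ^ 2 := by rw [Real.dist_eq, sq_abs]
    _ ≤ ∑ j, (sortedAbs y j - sortedAbs x j) ^ 2 :=
        single_le_sum (f := fun j => (sortedAbs y j - sortedAbs x j) ^ 2)
          (fun _ _ => sq_nonneg _) (mem_univ i)
    _ ≤ ∑ j, (y j - x j) ^ 2 := sum_sq_sortedAbs_sub_le y x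

lemma norm_sortedAbs_le (x : Fin p → ℝ) : ‖sortedAbs x‖ ≤ ‖x‖ :=
  (pi_norm_le_iff_of_nonneg (norm_nonneg x)).2 fun _ =>
    (norm_norm _).trans_le (norm_le_pi_norm x _)

lemma memLp_sortedAbs {α : Type*} [MeasurableSpace α] {μ : Measure α} {q : ENNReal}
    {X : α → Fin p → ℝ} (hX : MemLp X q μ) : MemLp (fun ω => sortedAbs (X ω)) q μ :=
  hX.of_le (continuous_sortedAbs.comp_aestronglyMeasurable hX.1)
    (.of_forall fun _ => norm_sortedAbs_le _)

end SortedAbs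

/-! ### The Moreau envelope of a linear functional on a set -/

section LinearEnvelope

variable {H : Type*} [NormedAddCommGroup H] [InnerProductSpace ℝ H] {K : Set H} {τ : ℝ}

/-- The Moreau envelope, at the point `q` and with parameter `τ`, of the linear functional
`⟪l, ·⟫` restricted to the set `K` (and equal to `+∞` outside of `K`). -/
noncomputable def linearEnvelope (K : Set H) (τ : ℝ) (q l : H) : ℝ :=
  ⨅ v : K, (1 / (2 * τ) * ‖q - v‖ ^ 2 + inner ℝ l (v : H))

lemma norm_sub_sq_add_inner_eq (hτ : τ ≠ 0) (q l v : H) :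
    1 / (2 * τ) * ‖q - v‖ ^ 2 + inner ℝ l v =
      1 / (2 * τ) * dist (q - τ • l) v ^ 2 + (inner ℝ l q - τ / 2 * ‖l‖ ^ 2) := by
  rw [dist_eq_norm, sub_right_comm, norm_sub_sq_real (q - v), norm_smul, inner_smul_right,
    inner_sub_left, real_inner_comm q, real_inner_comm v, Real.norm_eq_abs, mul_pow, sq_abs]
  field_simp
  ring

lemma linearEnvelope_le (hτ : 0 < τ) (q l : H) {v : H} (hv : v ∈ K) :
    linearEnvelope K τ q l ≤ 1 / (2 * τ) * ‖q - v‖ ^ 2 + inner ℝ l v := by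
  refine ciInf_le ⟨inner ℝ l q - τ / 2 * ‖l‖ ^ 2, Set.forall_mem_range.2 fun w => ?_⟩ (⟨v, hv⟩ : K)
  rw [norm_sub_sq_add_inner_eq hτ.ne']
  exact le_add_of_nonneg_left (by positivity)

lemma linearEnvelope_eq_infDist (hK : K.Nonempty) (hτ : 0 < τ) (q l : H) :
    linearEnvelope K τ q l =
      1 / (2 * τ) * Metric.infDist (q - τ • l) K ^ 2 + (inner ℝ l q - τ / 2 * ‖l‖ ^ 2) := by
  have : Nonempty K := hK.to_subtype
  let φ : ℝ → ℝ := fun t => 1 / (2 * τ) * max t 0 ^ 2 + (inner ℝ l q - τ / 2 * ‖l‖ ^ 2)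
  have hφ_mono : Monotone φ := fun s t hst => by simp only [φ]; gcongr
  have hφ_cont : Continuous φ := by fun_prop
  have hbdd : BddBelow (Set.range fun v : K => dist (q - τ • l) v) :=
    ⟨0, Set.forall_mem_range.2 fun _ => dist_nonneg⟩
  calc linearEnvelope K τ q l = ⨅ v : K, φ (dist (q - τ • l) v) := by
        simp only [linearEnvelope, φ, norm_sub_sq_add_inner_eq hτ.ne', max_eq_left dist_nonneg]
    _ = φ (Metric.infDist (q - τ • l) K) := by
        rw [Metric.infDist_eq_iInf, hφ_mono.map_ciInf_of_continuousAt hφ_cont.continuousAt hbdd]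
    _ = _ := by simp only [φ, max_eq_left Metric.infDist_nonneg]

lemma continuous_linearEnvelope (hK : K.Nonempty) (hτ : 0 < τ) :
    Continuous (Function.uncurry (linearEnvelope K τ)) := by
  simp only [Function.uncurry_def, linearEnvelope_eq_infDist hK hτ]
  fun_prop

lemma abs_linearEnvelope_sub_le (hK : K.Nonempty) (hτ : 0 < τ) (q q' l : H) :
    |linearEnvelope K τ q' l - linearEnvelope K τ q l| ≤
      (Metric.infDist (q - τ • l) K / τ + ‖l‖) * ‖q' - q‖ + ‖q' - q‖ ^ 2 / (2 * τ) := by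
  set a := Metric.infDist (q - τ • l) K with ha
  set b := Metric.infDist (q' - τ • l) K with hb
  have ha0 : 0 ≤ a := Metric.infDist_nonneg
  have hab : |b - a| ≤ ‖q' - q‖ := by
    simpa [← ha, ← hb, Real.dist_eq, dist_eq_norm] using
      (Metric.lipschitz_infDist_pt K).dist_le_mul (q' - τ • l) (q - τ • l)
  have hsq : |b ^ 2 - a ^ 2| ≤ ‖q' - q‖ * (2 * a + ‖q' - q‖) := by
    calc |b ^ 2 - a ^ 2| = |b - a| * |2 * a + (b - a)| := by rw [← abs_mul]; ring_nf
      _ ≤ ‖q' - q‖ * (2 * a + ‖q' - q‖) := by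
        gcongr
        exact (abs_add_le _ _).trans (add_le_add (abs_of_nonneg (by positivity)).le hab)
  have hinner : |inner ℝ l (q' - q)| ≤ ‖l‖ * ‖q' - q‖ := abs_real_inner_le_norm _ _
  calc |linearEnvelope K τ q' l - linearEnvelope K τ q l|
      = |1 / (2 * τ) * (b ^ 2 - a ^ 2) + inner ℝ l (q' - q)| := by
        rw [linearEnvelope_eq_infDist hK hτ, linearEnvelope_eq_infDist hK hτ, inner_sub_right,
          ← ha, ← hb]
        congr 1
        ring
    _ ≤ 1 / (2 * τ) * |b ^ 2 - a ^ 2| + |inner ℝ l (q' - q)| :=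
        (abs_add_le _ _).trans_eq (by rw [abs_mul, abs_of_pos (a := 1 / (2 * τ)) (by positivity)])
    _ ≤ 1 / (2 * τ) * (‖q' - q‖ * (2 * a + ‖q' - q‖)) + ‖l‖ * ‖q' - q‖ := by gcongr
    _ = (a / τ + ‖l‖) * ‖q' - q‖ + ‖q' - q‖ ^ 2 / (2 * τ) := by field_simp; ring

end LinearEnvelope

/-! ### Step functions in `L²(0, 1)` -/

section StepFunctions

/-- Lebesgue measure on the open unit interval. -/
noncomputable def unitMeasure : Measure ℝ := volume.restrict (Set.Ioo 0 1)

instance : IsProbabilityMeasure unitMeasure := ⟨by simp [unitMeasure]⟩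

/-- The Hilbert space `L²(0, 1)`. -/
noncomputable abbrev UnitL2 := Lp ℝ 2 unitMeasure

/-- The `i`-th of the `p` half-open intervals of length `1 / p` that partition `[0, 1)`. -/
def cell (p : ℕ) (i : Fin p) : Set ℝ := Set.Ico ((i : ℝ) / p) (((i : ℝ) + 1) / p)

variable {p : ℕ}

lemma ae_unitMeasure_mem_Ioo : ∀ᵐ u ∂unitMeasure, u ∈ Set.Ioo (0 : ℝ) 1 :=
  ae_restrict_mem measurableSet_Ioo

lemma measurableSet_cell (i : Fin p) : MeasurableSet (cell p i) := measurableSet_Ico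

lemma mem_cell_iff {i : Fin p} {u : ℝ} : u ∈ cell p i ↔ (i : ℝ) ≤ p * u ∧ p * u < i + 1 := by
  have hp : (0 : ℝ) < p := by exact_mod_cast i.pos
  rw [cell, Set.mem_Ico, div_le_iff₀' hp, lt_div_iff₀' hp]

lemma le_of_mem_cell {i j : Fin p} {u v : ℝ} (hu : u ∈ cell p i) (hv : v ∈ cell p j)
    (huv : u ≤ v) : i ≤ j := by
  have hlt : (i : ℝ) < j + 1 :=
    calc (i : ℝ) ≤ p * u := (mem_cell_iff.1 hu).1
      _ ≤ p * v := by gcongr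
      _ < j + 1 := (mem_cell_iff.1 hv).2
  exact Fin.le_def.2 (Nat.lt_succ_iff.1 (by exact_mod_cast hlt))

lemma cell_index_unique {i j : Fin p} {u : ℝ} (hi : u ∈ cell p i) (hj : u ∈ cell p j) : i = j :=
  le_antisymm (le_of_mem_cell hi hj le_rfl) (le_of_mem_cell hj hi le_rfl)

lemma exists_mem_cell (hp : 0 < p) {u : ℝ} (hu : u ∈ Set.Ioo (0 : ℝ) 1) : ∃ i, u ∈ cell p i := by
  have hp' : (0 : ℝ) < p := by exact_mod_cast hp
  have h0 : 0 ≤ (p : ℝ) * u := mul_nonneg hp'.le hu.1.le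
  have hlt : ⌊(p : ℝ) * u⌋₊ < p := (Nat.floor_lt h0).2 (mul_lt_of_lt_one_right hp' hu.2)
  exact ⟨⟨_, hlt⟩, mem_cell_iff.2 ⟨Nat.floor_le h0, Nat.lt_floor_add_one _⟩⟩

lemma unitMeasure_real_cell (i : Fin p) : unitMeasure.real (cell p i) = 1 / p := by
  have hp : (0 : ℝ) < p := by exact_mod_cast i.pos
  have hsub : cell p i ⊆ Set.Ico 0 1 := by
    refine Set.Ico_subset_Ico (by positivity) ((div_le_one hp).2 ?_)
    exact_mod_cast i.isLt
  rw [unitMeasure, Measure.restrict_congr_set Ioo_ae_eq_Ico, measureReal_restrict_apply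
    (measurableSet_cell i), Set.inter_eq_left.2 hsub, cell, Real.volume_real_Ico_of_le]
  · ring
  · gcongr
    exact le_add_of_nonneg_right zero_le_one

/-- The indicator function of `cell p i`, as an element of `L²(0, 1)`. -/
noncomputable def cellIndicator (p : ℕ) (i : Fin p) : UnitL2 :=
  indicatorConstLp 2 (measurableSet_cell i) (measure_ne_top _ _) (1 : ℝ)

lemma inner_cellIndicator (i j : Fin p) :
    inner ℝ (cellIndicator p i) (cellIndicator p j) = if i = j then 1 / (p : ℝ) else 0 := by
  rw [cellIndicator, cellIndicator, L2.real_inner_indicatorConstLp_one_indicatorConstLp_one]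
  split_ifs with h
  · rw [← h, Set.inter_self, unitMeasure_real_cell]
  · have hdisj : cell p i ∩ cell p j = ∅ :=
      Set.eq_empty_of_forall_notMem fun _ hu => h (cell_index_unique hu.1 hu.2)
    rw [hdisj, measureReal_empty]

/-- The linear map sending a vector `x` to the step function with value `x i` on `cell p i`. -/
noncomputable def stepL2 : (Fin p → ℝ) →L[ℝ] UnitL2 :=
  (Fintype.linearCombination ℝ (cellIndicator p)).toContinuousLinearMap

lemma stepL2_apply (x : Fin p → ℝ) : stepL2 x = ∑ i, x i • cellIndicator p i :=
  Fintype.linearCombination_apply ℝ _ x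

lemma inner_stepL2 (x y : Fin p → ℝ) :
    inner ℝ (stepL2 x) (stepL2 y) = (∑ i, x i * y i) / p := by
  simp only [stepL2_apply, sum_inner, inner_sum, real_inner_smul_left, real_inner_smul_right,
    inner_cellIndicator, mul_ite, mul_zero, sum_ite_eq', mem_univ, if_true, mul_one_div, sum_div]
  exact sum_congr rfl fun i _ => by ring

lemma norm_stepL2_sq (x : Fin p → ℝ) : ‖stepL2 x‖ ^ 2 = (∑ i, x i ^ 2) / p := by
  rw [← real_inner_self_eq_norm_sq, inner_stepL2]
  simp only [sq]

lemma stepL2_ae_eq_of_mem_cell (x : Fin p → ℝ) :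
    ∀ᵐ u ∂unitMeasure, ∀ i, u ∈ cell p i → stepL2 x u = x i := by
  have hterm (i : Fin p) : ∀ᵐ u ∂unitMeasure,
      (x i • cellIndicator p i : UnitL2) u = x i * (cell p i).indicator (fun _ => (1 : ℝ)) u := by
    filter_upwards [Lp.coeFn_smul (x i) (cellIndicator p i), indicatorConstLp_coeFn (p := 2)
      (hs := measurableSet_cell i) (hμs := measure_ne_top unitMeasure _) (c := (1 : ℝ))]
      with u hsmul hind
    rw [hsmul, Pi.smul_apply, smul_eq_mul, cellIndicator, hind]
  filter_upwards [Lp.coeFn_finsetSum univ fun i => x i • cellIndicator p i, ae_all_iff.2 hterm]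
    with u hsum hterm i hi
  rw [stepL2_apply, hsum, Finset.sum_apply, sum_eq_single i, hterm,
    Set.indicator_of_mem hi, mul_one]
  · intro j _ hji
    rw [hterm, Set.indicator_of_notMem fun hj => hji (cell_index_unique hj hi), mul_zero]
  · simp

/-- The cone of nonnegative nondecreasing functions in `L²(0, 1)`; both conditions are required
off a null set, so that they do not depend on the representative. -/
def monotoneCone : Set UnitL2 :=
  {v | ∃ A ∈ ae unitMeasure, MonotoneOn v A ∧ ∀ u ∈ A, 0 ≤ v u}

lemma zero_mem_monotoneCone : 0 ∈ monotoneCone := by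
  refine ⟨{u | (0 : UnitL2) u = 0}, Lp.coeFn_zero ℝ 2 unitMeasure, ?_, fun u hu => hu.ge⟩
  intro u hu v hv _
  rw [hu, hv]

lemma stepL2_ae_nonneg {w : Fin p → ℝ} (hw0 : ∀ i, 0 ≤ w i) : 0 ≤ᵐ[unitMeasure] stepL2 w := by
  rcases p.eq_zero_or_pos with rfl | hp
  · rw [stepL2_apply, univ_eq_empty, sum_empty]
    exact (Lp.coeFn_zero ℝ 2 unitMeasure).symm.le
  filter_upwards [ae_unitMeasure_mem_Ioo, stepL2_ae_eq_of_mem_cell w] with u hu hwu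
  obtain ⟨i, hi⟩ := exists_mem_cell hp hu
  rw [hwu i hi]
  exact hw0 i

lemma stepL2_mem_monotoneCone {w : Fin p → ℝ} (hw : Monotone w) (hw0 : ∀ i, 0 ≤ w i) :
    stepL2 w ∈ monotoneCone := by
  rcases p.eq_zero_or_pos with rfl | hp
  · simpa only [stepL2_apply, univ_eq_empty, sum_empty] using zero_mem_monotoneCone
  refine ⟨_, (ae_unitMeasure_mem_Ioo.and (stepL2_ae_eq_of_mem_cell w)).and (stepL2_ae_nonneg hw0),
    ?_, fun u hu => hu.2⟩
  rintro u ⟨⟨hu, hwu⟩, -⟩ v ⟨⟨hv, hwv⟩, -⟩ huv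
  obtain ⟨i, hi⟩ := exists_mem_cell hp hu
  obtain ⟨j, hj⟩ := exists_mem_cell hp hv
  rw [hwu i hi, hwv j hj]
  exact hw (le_of_mem_cell hi hj huv)

lemma setAverage_le_setAverage {α : Type*} [MeasurableSpace α] {μ : Measure α} [IsFiniteMeasure μ]
    {f : α → ℝ} {s t : Set α} (hs : μ s ≠ 0) (ht : μ t ≠ 0) (hf : Integrable f μ)
    (hle : ∀ᵐ x ∂μ.restrict s, ∀ᵐ y ∂μ.restrict t, f x ≤ f y) :
    ⨍ x in s, f x ∂μ ≤ ⨍ y in t, f y ∂μ := by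
  refine (convex_Iic _).set_average_mem isClosed_Iic hs (measure_ne_top _ _) ?_ hf.integrableOn
  filter_upwards [hle] with x hx
  exact (convex_Ici (f x)).set_average_mem isClosed_Ici ht (measure_ne_top _ _) hx hf.integrableOn

/-- The mean value of `v` over `cell p i`. -/
noncomputable def cellAverage (p : ℕ) (v : UnitL2) (i : Fin p) : ℝ :=
  ⨍ u in cell p i, v u ∂unitMeasure

lemma inner_cellIndicator_eq_cellAverage_div (v : UnitL2) (i : Fin p) :
    inner ℝ (cellIndicator p i) v = cellAverage p v i / p := by
  have hp : (p : ℝ) ≠ 0 := by exact_mod_cast i.pos.ne'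
  rw [cellIndicator, L2.inner_indicatorConstLp_one, cellAverage, setAverage_eq,
    unitMeasure_real_cell, smul_eq_mul]
  field_simp

lemma integrable_unitL2 (v : UnitL2) : Integrable v unitMeasure :=
  (Lp.memLp v).integrable one_le_two

lemma unitMeasure_cell_ne_zero (i : Fin p) : unitMeasure (cell p i) ≠ 0 := by
  have hp : (0 : ℝ) < p := by exact_mod_cast i.pos
  rw [← measureReal_ne_zero_iff, unitMeasure_real_cell]
  positivity

lemma monotone_cellAverage {v : UnitL2} (hv : v ∈ monotoneCone) : Monotone (cellAverage p v) := by
  obtain ⟨A, hA, hmono, -⟩ := hv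
  refine monotone_iff_forall_lt.2 fun i j hij => ?_
  refine setAverage_le_setAverage (unitMeasure_cell_ne_zero i) (unitMeasure_cell_ne_zero j)
    (integrable_unitL2 v) ?_
  filter_upwards [ae_restrict_mem (measurableSet_cell i), ae_restrict_of_ae hA] with u hui huA
  filter_upwards [ae_restrict_mem (measurableSet_cell j), ae_restrict_of_ae hA] with u' huj huA'
  refine hmono huA huA' (le_of_not_gt fun hlt => ?_)
  exact hij.not_ge (le_of_mem_cell huj hui hlt.le)

lemma cellAverage_nonneg {v : UnitL2} (hv : v ∈ monotoneCone) (i : Fin p) :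
    0 ≤ cellAverage p v i := by
  obtain ⟨A, hA, -, h0⟩ := hv
  refine integral_nonneg_of_ae (Measure.ae_smul_measure (ae_restrict_of_ae ?_) _)
  filter_upwards [hA] with u hu using h0 u hu

lemma inner_stepL2_cellAverage (x : Fin p → ℝ) (v : UnitL2) :
    inner ℝ (stepL2 x) (stepL2 (cellAverage p v)) = inner ℝ (stepL2 x) v := by
  rw [inner_stepL2, stepL2_apply x, sum_inner, sum_div]
  refine sum_congr rfl fun i _ => ?_
  rw [real_inner_smul_left, inner_cellIndicator_eq_cellAverage_div, mul_div_assoc]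

/-- `stepL2 (cellAverage p v)` is the orthogonal projection of `v` to the step functions. -/
lemma norm_stepL2_sub_stepL2_cellAverage_le (x : Fin p → ℝ) (v : UnitL2) :
    ‖stepL2 x - stepL2 (cellAverage p v)‖ ≤ ‖stepL2 x - v‖ := by
  have horth :
      inner ℝ (stepL2 x - stepL2 (cellAverage p v)) (stepL2 (cellAverage p v) - v) = 0 := by
    rw [← map_sub, inner_sub_right, inner_stepL2_cellAverage, sub_self]
  rw [← sub_add_sub_cancel (stepL2 x) (stepL2 (cellAverage p v)) v]
  refine (sq_le_sq₀ (norm_nonneg _) (norm_nonneg _)).1 ?_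
  rw [sq, sq, norm_add_sq_eq_norm_sq_add_norm_sq_real horth]
  exact le_add_of_nonneg_right (mul_self_nonneg _)

end StepFunctions

/-! ### The Moreau envelope of the sorted `ℓ¹` norm -/

section MoreauEnvelope

variable {p : ℕ} {τ : ℝ} {lam : Fin p → ℝ}

lemma sortedL1_div_eq_inner (lam x : Fin p → ℝ) :
    sortedL1 lam x / p = inner ℝ (stepL2 lam) (stepL2 (sortedAbs x)) :=
  (inner_stepL2 _ _).symm

lemma moreau_objective_div_eq (lam w y : Fin p → ℝ) :
    (1 / (2 * τ) * ∑ i, (y i - w i) ^ 2 + ∑ i, lam i * w i) / p =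
      1 / (2 * τ) * ‖stepL2 y - stepL2 w‖ ^ 2 + inner ℝ (stepL2 lam) (stepL2 w) := by
  simp only [← map_sub, norm_stepL2_sq, inner_stepL2, Pi.sub_apply]
  ring

lemma moreauJ_le (hτ : 0 < τ) (hlam : ∀ i, 0 ≤ lam i) (x v : Fin p → ℝ) :
    moreauJ lam x τ ≤ 1 / (2 * τ) * ∑ i, (x i - v i) ^ 2 + sortedL1 lam v := by
  refine ciInf_le ⟨0, Set.forall_mem_range.2 fun w => ?_⟩ v
  have hJ : 0 ≤ sortedL1 lam w := sum_nonneg fun i _ => mul_nonneg (hlam i) (sortedAbs_nonneg w i)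
  positivity

lemma linearEnvelope_le_moreauJ_div (hp : 0 < p) (hτ : 0 < τ) (lam x : Fin p → ℝ) :
    linearEnvelope monotoneCone τ (stepL2 (sortedAbs x)) (stepL2 lam) ≤ moreauJ lam x τ / p := by
  have hp' : (0 : ℝ) < p := by exact_mod_cast hp
  rw [le_div_iff₀ hp']
  refine le_ciInf fun v => (le_div_iff₀ hp').1 ?_
  calc linearEnvelope monotoneCone τ (stepL2 (sortedAbs x)) (stepL2 lam)
      ≤ 1 / (2 * τ) * ‖stepL2 (sortedAbs x) - stepL2 (sortedAbs v)‖ ^ 2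
          + inner ℝ (stepL2 lam) (stepL2 (sortedAbs v)) :=
        linearEnvelope_le hτ _ _
          (stepL2_mem_monotoneCone (monotone_sortedAbs v) (sortedAbs_nonneg v))
    _ = (1 / (2 * τ) * ∑ i, (sortedAbs x i - sortedAbs v i) ^ 2 + sortedL1 lam v) / p :=
        (moreau_objective_div_eq lam _ _).symm
    _ ≤ (1 / (2 * τ) * ∑ i, (x i - v i) ^ 2 + sortedL1 lam v) / p := by
        gcongr (_ * ?_ + _) / _
        exact sum_sq_sortedAbs_sub_le x v

lemma moreauJ_div_le_linearEnvelope (hτ : 0 < τ) (hlam : ∀ i, 0 ≤ lam i) (x : Fin p → ℝ) :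
    moreauJ lam x τ / p ≤ linearEnvelope monotoneCone τ (stepL2 (sortedAbs x)) (stepL2 lam) := by
  have : Nonempty monotoneCone := ⟨⟨0, zero_mem_monotoneCone⟩⟩
  refine le_ciInf fun ⟨v, hv⟩ => ?_
  set w := cellAverage p v
  obtain ⟨y, hyw, hxy⟩ := exists_sortedAbs_eq_sum_sq_sub_eq x (monotone_cellAverage hv)
    (cellAverage_nonneg hv)
  calc moreauJ lam x τ / p
      ≤ (1 / (2 * τ) * ∑ i, (x i - y i) ^ 2 + sortedL1 lam y) / p := by
        gcongr
        exact moreauJ_le hτ hlam x y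
    _ = 1 / (2 * τ) * ‖stepL2 (sortedAbs x) - stepL2 w‖ ^ 2
          + inner ℝ (stepL2 lam) (stepL2 w) := by
        rw [hxy, sortedL1, hyw, moreau_objective_div_eq]
    _ ≤ 1 / (2 * τ) * ‖stepL2 (sortedAbs x) - v‖ ^ 2 + inner ℝ (stepL2 lam) v := by
        rw [inner_stepL2_cellAverage]
        gcongr
        exact norm_stepL2_sub_stepL2_cellAverage_le _ v

lemma moreauJ_div_eq_linearEnvelope (hp : 0 < p) (hτ : 0 < τ) (hlam : ∀ i, 0 ≤ lam i)
    (x : Fin p → ℝ) :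
    moreauJ lam x τ / p = linearEnvelope monotoneCone τ (stepL2 (sortedAbs x)) (stepL2 lam) :=
  (moreauJ_div_le_linearEnvelope hτ hlam x).antisymm (linearEnvelope_le_moreauJ_div hp hτ lam x)

end MoreauEnvelope

/-! ### Quantile functions -/

section Quantile

variable {ρ : Measure ℝ}

/-- The quantile function of `ρ`, the generalised inverse of its distribution function. Only its
values on `(0, 1)` are meaningful: elsewhere the infimum may be that of an empty or unbounded
set. -/
noncomputable def quantile (ρ : Measure ℝ) (u : ℝ) : ℝ := sInf {t | u ≤ cdf ρ t}

lemma quantile_le_iff {u : ℝ} (hu : u ∈ Set.Ioo (0 : ℝ) 1) {t : ℝ} :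
    quantile ρ u ≤ t ↔ u ≤ cdf ρ t := by
  obtain ⟨b, hb⟩ := ((tendsto_cdf_atTop ρ).eventually (lt_mem_nhds hu.2)).exists
  obtain ⟨a, ha⟩ := ((tendsto_cdf_atBot ρ).eventually (gt_mem_nhds hu.1)).exists
  have hbdd : BddBelow {t | u ≤ cdf ρ t} :=
    ⟨a, fun s hs => le_of_not_gt fun hsa => (hs.trans (monotone_cdf ρ hsa.le)).not_gt ha⟩
  refine ⟨fun ht => ?_, fun ht => csInf_le hbdd ht⟩
  have hright : Tendsto (cdf ρ) (𝓝[>] quantile ρ u) (𝓝 (cdf ρ (quantile ρ u))) :=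
    ((cdf ρ).right_continuous _).mono Set.Ioi_subset_Ici_self
  refine (ge_of_tendsto hright ?_).trans (monotone_cdf ρ ht)
  filter_upwards [self_mem_nhdsWithin] with s hs
  obtain ⟨r, hr, hrs⟩ := exists_lt_of_csInf_lt ⟨b, hb.le⟩ hs
  exact hr.trans (monotone_cdf ρ hrs.le)

lemma lt_quantile_iff {u : ℝ} (hu : u ∈ Set.Ioo (0 : ℝ) 1) {t : ℝ} :
    t < quantile ρ u ↔ cdf ρ t < u := by
  rw [← not_le, quantile_le_iff hu, not_le]

lemma monotoneOn_quantile (ρ : Measure ℝ) : MonotoneOn (quantile ρ) (Set.Ioo 0 1) :=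
  fun _ hu _ hv huv => (quantile_le_iff hu).2 (huv.trans ((quantile_le_iff hv).1 le_rfl))

lemma aemeasurable_quantile (ρ : Measure ℝ) : AEMeasurable (quantile ρ) unitMeasure :=
  aemeasurable_restrict_of_monotoneOn measurableSet_Ioo (monotoneOn_quantile ρ)

lemma map_quantile (ρ : Measure ℝ) [IsProbabilityMeasure ρ] :
    unitMeasure.map (quantile ρ) = ρ := by
  have := Measure.isProbabilityMeasure_map (aemeasurable_quantile ρ)
  refine Measure.ext_of_Iic _ _ fun t => ?_
  have hpre : quantile ρ ⁻¹' Set.Iic t =ᵐ[unitMeasure] Set.Iic (cdf ρ t) := by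
    filter_upwards [ae_unitMeasure_mem_Ioo] with u hu using propext (quantile_le_iff hu)
  have hinter : Set.Iic (cdf ρ t) ∩ Set.Ioc (0 : ℝ) 1 = Set.Ioc 0 (cdf ρ t) := by
    rw [Set.inter_comm, Set.Ioc_inter_Iic, min_eq_right (cdf_le_one ρ t)]
  rw [Measure.map_apply_of_aemeasurable (aemeasurable_quantile ρ) measurableSet_Iic,
    measure_congr hpre, unitMeasure, Measure.restrict_congr_set Ioo_ae_eq_Ioc,
    Measure.restrict_apply measurableSet_Iic, hinter, Real.volume_Ioc, sub_zero, ofReal_cdf]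

lemma memLp_quantile [IsProbabilityMeasure ρ] {q : ENNReal} (hρ : MemLp id q ρ) :
    MemLp (quantile ρ) q unitMeasure := by
  rw [← map_quantile ρ] at hρ
  exact (memLp_map_measure_iff aestronglyMeasurable_id (aemeasurable_quantile ρ)).1 hρ

lemma integral_quantile_sq (ρ : Measure ℝ) [IsProbabilityMeasure ρ] :
    ∫ u, quantile ρ u ^ 2 ∂unitMeasure = ∫ t, t ^ 2 ∂ρ := by
  conv_rhs => rw [← map_quantile ρ]
  exact (integral_map (f := (· ^ 2)) (aemeasurable_quantile ρ) (by fun_prop)).symm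

lemma ae_le_quantile [IsProbabilityMeasure ρ] {a : ℝ} (hρ : ∀ᵐ t ∂ρ, a ≤ t) :
    ∀ᵐ u ∂unitMeasure, a ≤ quantile ρ u := by
  rw [← map_quantile ρ] at hρ
  exact ae_of_ae_map (aemeasurable_quantile ρ) hρ

lemma exists_boundedContinuous_integral_lt [IsProbabilityMeasure ρ] {u t : ℝ}
    (hu : u ∈ Set.Ioo (0 : ℝ) 1) (ht : t < quantile ρ u) :
    ∃ f : BoundedContinuousFunction ℝ ℝ,
      (∀ s, 0 ≤ f s) ∧ (∀ s ≤ t, f s = 1) ∧ ∫ s, f s ∂ρ < u := by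
  obtain ⟨t', htt', ht'⟩ := exists_between ht
  have hdisj : Disjoint (Set.Ici t') (Set.Iic t) :=
    Set.disjoint_left.2 fun s hs hs' => (htt'.trans_le hs).not_ge hs'
  obtain ⟨f, hf0, hf1, hf01⟩ :=
    exists_bounded_zero_one_of_closed isClosed_Ici isClosed_Iic hdisj
  refine ⟨f, fun s => (hf01 s).1, fun s hs => hf1 hs, ?_⟩
  calc ∫ s, f s ∂ρ ≤ ∫ s, (Set.Iic t').indicator 1 s ∂ρ := by
        refine integral_mono (f.integrable ρ)
          ((integrable_const 1).indicator measurableSet_Iic) fun s => ?_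
        by_cases hs : s ≤ t'
        · rw [Set.indicator_of_mem (Set.mem_Iic.2 hs)]
          exact (hf01 s).2
        · rw [Set.indicator_of_notMem (by simpa using hs), hf0 (le_of_not_ge hs), Pi.zero_apply]
    _ = cdf ρ t' := by rw [integral_indicator_one measurableSet_Iic, cdf_eq_real]
    _ < u := (lt_quantile_iff hu).1 ht'

/-- The quantile function of a law with finite second moment, as an element of `L²(0, 1)`. -/
noncomputable def quantileL2 [IsProbabilityMeasure ρ] (hρ : MemLp id 2 ρ) : UnitL2 :=
  (memLp_quantile hρ).toLp

lemma coeFn_quantileL2 [IsProbabilityMeasure ρ] (hρ : MemLp id 2 ρ) :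
    quantileL2 hρ =ᵐ[unitMeasure] quantile ρ :=
  (memLp_quantile hρ).coeFn_toLp

lemma norm_quantileL2_sq [IsProbabilityMeasure ρ] (hρ : MemLp id 2 ρ) :
    ‖quantileL2 hρ‖ ^ 2 = ∫ t, t ^ 2 ∂ρ := by
  rw [← real_inner_self_eq_norm_sq, L2.inner_def, ← integral_quantile_sq]
  refine integral_congr_ae ?_
  filter_upwards [coeFn_quantileL2 hρ] with u hu
  rw [hu, real_inner_self_eq_norm_sq, Real.norm_eq_abs, sq_abs]

end Quantile

/-! ### Empirical convergence of random vectors -/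

section EmpiricalConvergence

variable {Ω : ℕ → Type*} [∀ p, MeasurableSpace (Ω p)] {P : ∀ p, Measure (Ω p)}
  {X : ∀ p, Ω p → Fin p → ℝ} {μ ρ : Measure ℝ}

/-- The empirical measures of the square-integrable random vectors `X p` converge to `μ`: averages
of bounded continuous functions converge in mean, and the expected second moments converge to the
second moment of `μ`. -/
structure EmpConvergesInMean (P : ∀ p, Measure (Ω p)) (X : ∀ p, Ω p → Fin p → ℝ)
    (μ : Measure ℝ) : Prop where
  memLp : ∀ p, MemLp (X p) 2 (P p)
  memLp_limit : MemLp id 2 μ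
  tendstoInMean (f : BoundedContinuousFunction ℝ ℝ) :
    TendstoInMean P (fun p ω => (∑ i, f (X p ω i)) / p) atTop (∫ t, f t ∂μ)
  tendsto_integral_sq :
    Tendsto (fun p => ∫ ω, (∑ i, X p ω i ^ 2) / p ∂P p) atTop (𝓝 (∫ t, t ^ 2 ∂μ))

lemma EmpConverges.inMean_dirac {x : ∀ p : ℕ, Fin p → ℝ} (hx : EmpConverges x μ)
    (hμ : MemLp id 2 μ)
    (hx2 : Tendsto (fun p => (∑ i, x p i ^ 2) / (p : ℝ)) atTop (𝓝 (∫ t, t ^ 2 ∂μ))) :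
    EmpConvergesInMean (fun _ => Measure.dirac ()) (fun p _ => x p) μ where
  memLp _ := memLp_const _
  memLp_limit := hμ
  tendstoInMean f := by
    refine ⟨.of_forall fun _ => integrable_const _, ?_⟩
    simpa using ((hx f).sub_const (∫ t, f t ∂μ)).abs
  tendsto_integral_sq := by simpa only [integral_dirac] using hx2

lemma EmpConvergesInMean.sortedAbs (hX : EmpConvergesInMean P X μ) :
    EmpConvergesInMean P (fun p ω => sortedAbs (X p ω)) (μ.map (|·|)) where
  memLp p := memLp_sortedAbs (hX.memLp p)
  memLp_limit := (memLp_map_measure_iff aestronglyMeasurable_id (by fun_prop)).2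
    hX.memLp_limit.abs
  tendstoInMean f := by
    have hf := hX.tendstoInMean (f.compContinuous ⟨(|·|), continuous_abs⟩)
    rw [integral_map (by fun_prop) f.continuous.aestronglyMeasurable]
    simp only [sum_comp_sortedAbs f]
    exact hf
  tendsto_integral_sq := by
    rw [integral_map (f := (· ^ 2)) (by fun_prop) (by fun_prop)]
    simpa only [sum_sortedAbs_sq, sq_abs] using hX.tendsto_integral_sq

/-- If the `j`-th entry of `y` is at most `t`, then at least `j + 1` entries are, so the average of
`f` over the entries is at least `u`. -/
lemma mul_one_sub_le_of_mem_cell {p : ℕ} {y : Fin p → ℝ} (hy : Monotone y) (hy0 : ∀ i, 0 ≤ y i)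
    {t : ℝ} (ht : 0 ≤ t) {f : ℝ → ℝ} (hf0 : ∀ s, 0 ≤ f s) (hf1 : ∀ s ≤ t, f s = 1) {a u : ℝ}
    (ha : a < u) {j : Fin p} (hu : u ∈ cell p j) :
    t * (1 - |(∑ i, f (y i)) / p - a| / (u - a)) ≤ y j := by
  have hp : (0 : ℝ) < p := by exact_mod_cast j.pos
  have hd : 0 < u - a := sub_pos.2 ha
  rcases lt_or_ge t (y j) with hj | hj
  · refine (mul_le_of_le_one_right ht ?_).trans hj.le
    exact sub_le_self 1 (by positivity)
  have hcount : (j : ℝ) + 1 ≤ ∑ i, f (y i) :=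
    calc (j : ℝ) + 1 = ∑ i ∈ Iic j, f (y i) := by
          rw [sum_congr rfl fun i hi => hf1 _ ((hy (mem_Iic.1 hi)).trans hj)]
          simp
      _ ≤ ∑ i, f (y i) :=
          sum_le_sum_of_subset_of_nonneg (subset_univ _) fun i _ _ => hf0 _
  have havg : u ≤ (∑ i, f (y i)) / p := by
    rw [le_div_iff₀' hp]
    exact (mem_cell_iff.1 hu).2.le.trans hcount
  have hdev : 1 ≤ |(∑ i, f (y i)) / p - a| / (u - a) := by
    rw [one_le_div hd]
    exact (sub_le_sub_right havg a).trans (le_abs_self _)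
  exact (mul_nonpos_of_nonneg_of_nonpos ht (sub_nonpos.2 hdev)).trans (hy0 j)

lemma integral_norm_sub_sq {α H : Type*} [MeasurableSpace α] {μ : Measure α}
    [IsProbabilityMeasure μ] [NormedAddCommGroup H] [InnerProductSpace ℝ H] [CompleteSpace H]
    {S : α → H} (hS : MemLp S 2 μ) (q : H) :
    ∫ ω, ‖S ω - q‖ ^ 2 ∂μ = ∫ ω, ‖S ω‖ ^ 2 ∂μ - 2 * inner ℝ q (∫ ω, S ω ∂μ) + ‖q‖ ^ 2 := by
  have hint : Integrable S μ := hS.integrable one_le_two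
  have hsq : Integrable (fun ω => ‖S ω‖ ^ 2) μ := hS.integrable_norm_pow two_ne_zero
  have hinner : Integrable (fun ω => 2 * inner ℝ q (S ω)) μ := (hint.const_inner q).const_mul 2
  have hdiff : Integrable (fun ω => ‖S ω‖ ^ 2 - 2 * inner ℝ q (S ω)) μ := hsq.sub hinner
  simp only [norm_sub_sq_real, real_inner_comm q]
  rw [integral_add hdiff (integrable_const _), integral_sub hsq hinner,
    integral_const_mul, integral_inner hint, integral_const, probReal_univ, one_smul]

/-- The truncation at `q` makes dominated convergence applicable to functions `g p` that are only
known to be asymptotically at least `q`. -/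
lemma tendsto_integral_mul_min {α : Type*} [MeasurableSpace α] {μ : Measure α} {q : α → ℝ}
    {g : ℕ → α → ℝ} (hq : MemLp q 2 μ) (hq0 : 0 ≤ᵐ[μ] q)
    (hg : ∀ p, AEStronglyMeasurable (g p) μ) (hg0 : ∀ p, 0 ≤ᵐ[μ] g p)
    (hlim : ∀ᵐ u ∂μ, ∀ t < q u, ∀ᶠ p in atTop, t < g p u) :
    Tendsto (fun p => ∫ u, q u * min (g p u) (q u) ∂μ) atTop (𝓝 (∫ u, q u ^ 2 ∂μ)) := by
  refine tendsto_integral_of_dominated_convergence (fun u => q u ^ 2)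
    (fun p => hq.1.mul ((hg p).inf hq.1)) hq.integrable_sq (fun p => ?_) ?_
  · filter_upwards [hq0, hg0 p] with u hqu hgu
    rw [Real.norm_of_nonneg (mul_nonneg hqu (le_min hgu hqu)), sq]
    exact mul_le_mul_of_nonneg_left (min_le_right _ _) hqu
  · filter_upwards [hlim] with u hu
    have hmin : Tendsto (fun p => min (g p u) (q u)) atTop (𝓝 (q u)) :=
      tendsto_order.2 ⟨fun t ht => (hu t ht).mono fun p hp => lt_min hp ht,
        fun t ht => .of_forall fun p => (min_le_right _ _).trans_lt ht⟩
    simpa only [sq] using hmin.const_mul (q u)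

variable [∀ p, IsProbabilityMeasure (P p)] [IsProbabilityMeasure ρ]

lemma mul_one_sub_le_integral_of_mem_cell {α : Type*} [MeasurableSpace α] {μ : Measure α}
    [IsProbabilityMeasure μ] {p : ℕ} {Y : α → Fin p → ℝ} (hY : Integrable Y μ)
    (hmono : ∀ ω, Monotone (Y ω)) (h0 : ∀ ω i, 0 ≤ Y ω i) {t : ℝ} (ht : 0 ≤ t)
    {f : ℝ → ℝ} (hf0 : ∀ s, 0 ≤ f s) (hf1 : ∀ s ≤ t, f s = 1) {a u : ℝ} (ha : a < u)
    (hfY : Integrable (fun ω => (∑ i, f (Y ω i)) / p) μ) {j : Fin p} (hu : u ∈ cell p j) :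
    t * (1 - (∫ ω, |(∑ i, f (Y ω i)) / p - a| ∂μ) / (u - a)) ≤ ∫ ω, Y ω j ∂μ := by
  have hdev : Integrable (fun ω => |(∑ i, f (Y ω i)) / p - a| / (u - a)) μ :=
    (hfY.sub (integrable_const a)).abs.div_const _
  calc t * (1 - (∫ ω, |(∑ i, f (Y ω i)) / p - a| ∂μ) / (u - a))
      = ∫ ω, t * (1 - |(∑ i, f (Y ω i)) / p - a| / (u - a)) ∂μ := by
        rw [integral_const_mul, integral_sub (integrable_const _) hdev, integral_div,
          integral_const, probReal_univ, one_smul]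
    _ ≤ ∫ ω, Y ω j ∂μ :=
        integral_mono (((integrable_const 1).sub hdev).const_mul t) (hY.eval j) fun ω =>
          mul_one_sub_le_of_mem_cell (hmono ω) (h0 ω) ht hf0 hf1 ha hu

lemma eventually_lt_stepL2_integral (hX : EmpConvergesInMean P X ρ)
    (hmono : ∀ p ω, Monotone (X p ω)) (h0 : ∀ p ω i, 0 ≤ X p ω i) :
    ∀ᵐ u ∂unitMeasure, ∀ t < quantile ρ u, ∀ᶠ p in atTop, t < stepL2 (∫ ω, X p ω ∂P p) u := by
  have hint (p : ℕ) : Integrable (X p) (P p) := (hX.memLp p).integrable one_le_two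
  have hstep := ae_all_iff.2 fun p => stepL2_ae_eq_of_mem_cell (∫ ω, X p ω ∂P p)
  filter_upwards [hstep, ae_unitMeasure_mem_Ioo] with u hstep hu t ht
  rcases lt_or_ge t 0 with ht0 | ht0
  · filter_upwards [eventually_gt_atTop 0] with p hp
    obtain ⟨j, hj⟩ := exists_mem_cell hp hu
    rw [hstep p j hj, eval_integral (hint p).eval]
    exact ht0.trans_le (integral_nonneg fun ω => h0 p ω j)
  obtain ⟨t', htt', ht'⟩ := exists_between ht
  obtain ⟨f, hf0, hf1, hfu⟩ := exists_boundedContinuous_integral_lt hu ht'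
  have hf := hX.tendstoInMean f
  set a := ∫ s, f s ∂ρ
  have hlim : Tendsto (fun p => t' * (1 - (∫ ω, |(∑ i, f (X p ω i)) / p - a| ∂P p) / (u - a)))
      atTop (𝓝 t') := by
    simpa using ((hf.tendsto_integral_abs_sub.div_const (u - a)).const_sub 1).const_mul t'
  filter_upwards [hlim.eventually (lt_mem_nhds htt'), hf.eventually_integrable,
    eventually_gt_atTop 0] with p hp hfp hp0
  obtain ⟨j, hj⟩ := exists_mem_cell hp0 hu
  rw [hstep p j hj, eval_integral (hint p).eval]
  exact hp.trans_le (mul_one_sub_le_integral_of_mem_cell (hint p) (hmono p) (h0 p)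
    (ht0.trans htt'.le) hf0 hf1 hfu hfp hj)

lemma integral_mul_min_le_inner_quantileL2 (hρ : MemLp id 2 ρ) (hρ0 : ∀ᵐ t ∂ρ, 0 ≤ t)
    (v : UnitL2) :
    ∫ u, quantile ρ u * min (v u) (quantile ρ u) ∂unitMeasure ≤ inner ℝ (quantileL2 hρ) v := by
  have hq := memLp_quantile hρ
  have hinner : inner ℝ (quantileL2 hρ) v = ∫ u, quantile ρ u * v u ∂unitMeasure := by
    rw [L2.inner_def]
    refine integral_congr_ae ?_
    filter_upwards [coeFn_quantileL2 hρ] with u hu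
    rw [hu, real_inner_comm]
    rfl
  rw [hinner]
  refine integral_mono_ae (hq.integrable_mul ((Lp.memLp v).inf hq))
    (hq.integrable_mul (Lp.memLp v)) ?_
  filter_upwards [ae_le_quantile hρ0] with u hu
  exact mul_le_mul_of_nonneg_left (min_le_left _ _) hu

lemma tendsto_integral_norm_stepL2_sub_quantileL2_sq (hX : EmpConvergesInMean P X ρ)
    (hmono : ∀ p ω, Monotone (X p ω)) (h0 : ∀ p ω i, 0 ≤ X p ω i) (hρ0 : ∀ᵐ t ∂ρ, 0 ≤ t) :
    Tendsto (fun p => ∫ ω, ‖stepL2 (X p ω) - quantileL2 hX.memLp_limit‖ ^ 2 ∂P p) atTop (𝓝 0) := by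
  set q := quantileL2 hX.memLp_limit with hq
  have hint (p : ℕ) : Integrable (X p) (P p) := (hX.memLp p).integrable one_le_two
  let g : ℕ → UnitL2 := fun p => stepL2 (∫ ω, X p ω ∂P p)
  have hg0 (p : ℕ) : 0 ≤ᵐ[unitMeasure] g p := stepL2_ae_nonneg fun i => by
    rw [eval_integral (hint p).eval]
    exact integral_nonneg fun ω => h0 p ω i
  have hmin := tendsto_integral_mul_min (memLp_quantile hX.memLp_limit) (ae_le_quantile hρ0)
    (fun p => Lp.aestronglyMeasurable (g p)) hg0 (eventually_lt_stepL2_integral hX hmono h0)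
  rw [integral_quantile_sq] at hmin
  have hexpand (p : ℕ) : ∫ ω, ‖stepL2 (X p ω) - q‖ ^ 2 ∂P p =
      ∫ ω, (∑ i, X p ω i ^ 2) / p ∂P p - 2 * inner ℝ q (g p) + ∫ t, t ^ 2 ∂ρ := by
    have hsub := integral_norm_sub_sq (stepL2.comp_memLp' (hX.memLp p)) q
    simp only [Function.comp_apply, norm_stepL2_sq] at hsub
    rw [hsub, ContinuousLinearMap.integral_comp_comm _ (hint p), hq, norm_quantileL2_sq]
  have hlim : Tendsto (fun p => ∫ ω, (∑ i, X p ω i ^ 2) / p ∂P p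
      - 2 * ∫ u, quantile ρ u * min (g p u) (quantile ρ u) ∂unitMeasure
      + ∫ t, t ^ 2 ∂ρ) atTop (𝓝 0) := by
    convert (hX.tendsto_integral_sq.sub (hmin.const_mul 2)).add_const (∫ t, t ^ 2 ∂ρ) using 2
    ring
  refine squeeze_zero (fun p => integral_nonneg fun ω => sq_nonneg _) (fun p => ?_) hlim
  rw [hexpand]
  gcongr
  exact integral_mul_min_le_inner_quantileL2 hX.memLp_limit hρ0 _

lemma exists_tendsto_integral_norm_stepL2_sortedAbs_sub_sq [IsProbabilityMeasure μ]
    (hX : EmpConvergesInMean P X μ) :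
    ∃ q : UnitL2,
      Tendsto (fun p => ∫ ω, ‖stepL2 (sortedAbs (X p ω)) - q‖ ^ 2 ∂P p) atTop (𝓝 0) := by
  have : IsProbabilityMeasure (μ.map (|·|)) := Measure.isProbabilityMeasure_map (by fun_prop)
  exact ⟨_, tendsto_integral_norm_stepL2_sub_quantileL2_sq hX.sortedAbs
    (fun p ω => monotone_sortedAbs _) (fun p ω i => sortedAbs_nonneg _ i)
    ((ae_map_iff (by fun_prop) measurableSet_Ici).2 (.of_forall fun t => abs_nonneg t))⟩

lemma exists_tendsto_stepL2_sortedAbs [IsProbabilityMeasure μ] {x : ∀ p : ℕ, Fin p → ℝ}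
    (hx : EmpConverges x μ) (hμ : MemLp id 2 μ)
    (hx2 : Tendsto (fun p => (∑ i, x p i ^ 2) / (p : ℝ)) atTop (𝓝 (∫ t, t ^ 2 ∂μ))) :
    ∃ q : UnitL2, Tendsto (fun p => stepL2 (sortedAbs (x p))) atTop (𝓝 q) := by
  obtain ⟨q, hq⟩ := exists_tendsto_integral_norm_stepL2_sortedAbs_sub_sq (hx.inMean_dirac hμ hx2)
  refine ⟨q, tendsto_iff_norm_sub_tendsto_zero.2 ?_⟩
  simpa using hq.sqrt

end EmpiricalConvergence

/-! ### Convergence of the normalised Moreau envelopes -/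

section RandomEnvelope

variable {α : Type*} [MeasurableSpace α] {μ : Measure α} {H : Type*} [NormedAddCommGroup H]
  [InnerProductSpace ℝ H] {K : Set H} {τ : ℝ} {S : α → H}

lemma integrable_linearEnvelope [IsFiniteMeasure μ] (hK : K.Nonempty) (hτ : 0 < τ)
    (hS : MemLp S 2 μ) (l : H) : Integrable (fun ω => linearEnvelope K τ (S ω) l) μ := by
  have hmeas : AEStronglyMeasurable (fun ω => linearEnvelope K τ (S ω) l) μ :=
    ((continuous_linearEnvelope hK hτ).uncurry_right l).comp_aestronglyMeasurable hS.1
  have hbound : Integrable (fun ω => (Metric.infDist ((0 : H) - τ • l) K / τ + ‖l‖) * ‖S ω - 0‖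
      + ‖S ω - 0‖ ^ 2 / (2 * τ)) μ := by
    simp only [sub_zero]
    exact ((hS.integrable one_le_two).norm.const_mul _).add
      ((hS.integrable_norm_pow two_ne_zero).div_const _)
  have hdiff := hbound.mono' (hmeas.sub aestronglyMeasurable_const)
    (.of_forall fun ω => abs_linearEnvelope_sub_le hK hτ 0 (S ω) l)
  simpa using hdiff.add (integrable_const (linearEnvelope K τ 0 l))

lemma integral_abs_linearEnvelope_sub_le [IsProbabilityMeasure μ] (hK : K.Nonempty) (hτ : 0 < τ)
    (hS : MemLp S 2 μ) (q l : H) :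
    ∫ ω, |linearEnvelope K τ (S ω) l - linearEnvelope K τ q l| ∂μ ≤
      (Metric.infDist (q - τ • l) K / τ + ‖l‖) * √(∫ ω, ‖S ω - q‖ ^ 2 ∂μ)
        + (∫ ω, ‖S ω - q‖ ^ 2 ∂μ) / (2 * τ) := by
  have hD : MemLp (fun ω => ‖S ω - q‖) 2 μ := (hS.sub (memLp_const q)).norm
  have hD1 : Integrable (fun ω => ‖S ω - q‖) μ := hD.integrable one_le_two
  have hD2 : Integrable (fun ω => ‖S ω - q‖ ^ 2 / (2 * τ)) μ := hD.integrable_sq.div_const _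
  have hsqrt : ∫ ω, ‖S ω - q‖ ∂μ ≤ √(∫ ω, ‖S ω - q‖ ^ 2 ∂μ) := by
    simpa only [abs_norm] using integral_abs_le_sqrt_integral_sq hD
  set C := Metric.infDist (q - τ • l) K / τ + ‖l‖
  have hC0 : 0 ≤ C := add_nonneg (div_nonneg Metric.infDist_nonneg hτ.le) (norm_nonneg l)
  calc ∫ ω, |linearEnvelope K τ (S ω) l - linearEnvelope K τ q l| ∂μ
      ≤ ∫ ω, (C * ‖S ω - q‖ + ‖S ω - q‖ ^ 2 / (2 * τ)) ∂μ :=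
        integral_mono ((integrable_linearEnvelope hK hτ hS l).sub (integrable_const _)).abs
          ((hD1.const_mul C).add hD2) fun ω => abs_linearEnvelope_sub_le hK hτ q (S ω) l
    _ = C * ∫ ω, ‖S ω - q‖ ∂μ + (∫ ω, ‖S ω - q‖ ^ 2 ∂μ) / (2 * τ) := by
        rw [integral_add (hD1.const_mul C) hD2, integral_const_mul, integral_div]
    _ ≤ C * √(∫ ω, ‖S ω - q‖ ^ 2 ∂μ) + (∫ ω, ‖S ω - q‖ ^ 2 ∂μ) / (2 * τ) := by gcongr

lemma tendstoInMean_linearEnvelope {ι : Type*} {f : Filter ι} {Ω : ι → Type*}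
    [∀ i, MeasurableSpace (Ω i)] {P : ∀ i, Measure (Ω i)} [∀ i, IsProbabilityMeasure (P i)]
    {S : ∀ i, Ω i → H} {L : ι → H} {q l : H} (hK : K.Nonempty) (hτ : 0 < τ)
    (hS : ∀ i, MemLp (S i) 2 (P i))
    (hSq : Tendsto (fun i => ∫ ω, ‖S i ω - q‖ ^ 2 ∂P i) f (𝓝 0)) (hL : Tendsto L f (𝓝 l)) :
    TendstoInMean P (fun i ω => linearEnvelope K τ (S i ω) (L i)) f (linearEnvelope K τ q l) := by
  have hE : Tendsto (fun i => linearEnvelope K τ q (L i)) f (𝓝 (linearEnvelope K τ q l)) :=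
    (((continuous_linearEnvelope hK hτ).uncurry_left q).tendsto l).comp hL
  have hr : Tendsto (fun i => (Metric.infDist (q - τ • L i) K / τ + ‖L i‖)
      * √(∫ ω, ‖S i ω - q‖ ^ 2 ∂P i) + (∫ ω, ‖S i ω - q‖ ^ 2 ∂P i) / (2 * τ)) f (𝓝 0) := by
    have hC : Continuous fun m : H => Metric.infDist (q - τ • m) K / τ + ‖m‖ := by fun_prop
    simpa using (((hC.tendsto l).comp hL).mul hSq.sqrt).add (hSq.div_const (2 * τ))
  have hdev : TendstoInMean P
      (fun i ω => linearEnvelope K τ (S i ω) (L i) - linearEnvelope K τ q (L i)) f 0 := by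
    refine .of_eventually_le (.of_forall fun i => ?_) hr (.of_forall fun i => ?_)
    · exact (integrable_linearEnvelope hK hτ (hS i) _).sub (integrable_const _)
    · simpa only [sub_zero] using integral_abs_linearEnvelope_sub_le hK hτ (hS i) q (L i)
  simpa using hdev.sub_deterministic hE.neg

end RandomEnvelope

section MoreauConvergence

variable {Ω : ℕ → Type*} [∀ p, MeasurableSpace (Ω p)] {P : ∀ p, Measure (Ω p)}
  [∀ p, IsProbabilityMeasure (P p)] {X : ∀ p, Ω p → Fin p → ℝ} {lam : ∀ p : ℕ, Fin p → ℝ}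
  {μ : Measure ℝ} {τ : ℝ} {l : UnitL2}

lemma exists_tendstoInMean_moreauJ_div [IsProbabilityMeasure μ]
    (hX : EmpConvergesInMean P X μ) (hlam0 : ∀ p i, 0 ≤ lam p i)
    (hl : Tendsto (fun p => stepL2 (lam p)) atTop (𝓝 l)) (hτ : 0 < τ) :
    ∃ a, TendstoInMean P (fun p ω => moreauJ (lam p) (X p ω) τ / p) atTop a := by
  obtain ⟨q, hq⟩ := exists_tendsto_integral_norm_stepL2_sortedAbs_sub_sq hX
  have hE := tendstoInMean_linearEnvelope ⟨0, zero_mem_monotoneCone⟩ hτ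
    (fun p => stepL2.comp_memLp' (memLp_sortedAbs (hX.memLp p))) hq hl
  refine ⟨_, hE.congr ?_⟩
  filter_upwards [eventually_gt_atTop 0] with p hp ω
  exact (moreauJ_div_eq_linearEnvelope hp hτ (hlam0 p) (X p ω)).symm

lemma exists_tendsto_sortedL1_div [IsProbabilityMeasure μ] {x : ∀ p : ℕ, Fin p → ℝ}
    (hx : EmpConverges x μ) (hμ : MemLp id 2 μ)
    (hx2 : Tendsto (fun p => (∑ i, x p i ^ 2) / (p : ℝ)) atTop (𝓝 (∫ t, t ^ 2 ∂μ)))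
    (hl : Tendsto (fun p => stepL2 (lam p)) atTop (𝓝 l)) :
    ∃ b, Tendsto (fun p => sortedL1 (lam p) (x p) / p) atTop (𝓝 b) := by
  obtain ⟨q, hq⟩ := exists_tendsto_stepL2_sortedAbs hx hμ hx2
  exact ⟨_, by simpa only [sortedL1_div_eq_inner] using hl.inner hq⟩

end MoreauConvergence

/-! ### Deterministic vectors perturbed by independent noise -/

section FirstMoment

variable {x : ∀ p : ℕ, Fin p → ℝ} {μ : Measure ℝ}

lemma abs_sub_div_one_add_le {δ : ℝ} (hδ : 0 ≤ δ) (t : ℝ) :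
    |t - t / (1 + δ * |t|)| ≤ δ * t ^ 2 := by
  have h1 : 1 ≤ 1 + δ * |t| := le_add_of_nonneg_right (by positivity)
  have h0 : 0 < 1 + δ * |t| := by positivity
  have hdiff : t - t / (1 + δ * |t|) = t * (δ * |t|) / (1 + δ * |t|) := by field_simp; ring
  calc |t - t / (1 + δ * |t|)| = δ * t ^ 2 / (1 + δ * |t|) := by
        rw [hdiff, abs_div, abs_mul, abs_mul, abs_abs, abs_of_pos h0, abs_of_nonneg hδ, ← sq_abs t]
        ring
    _ ≤ δ * t ^ 2 := div_le_self (by positivity) h1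

/-- `t ↦ t / (1 + δ|t|)`, a bounded continuous approximation of the identity for small `δ`. -/
noncomputable def softClamp (δ : ℝ) (hδ : 0 < δ) : BoundedContinuousFunction ℝ ℝ :=
  .ofNormedAddCommGroup (fun t => t / (1 + δ * |t|))
    (by
      refine continuous_id.div (by fun_prop) fun t => ?_
      positivity)
    δ⁻¹ fun t => by
      have h0 : 0 < 1 + δ * |t| := by positivity
      rw [norm_div, Real.norm_eq_abs, Real.norm_eq_abs, abs_of_pos h0, div_le_iff₀ h0, mul_add,
        inv_mul_cancel_left₀ hδ.ne']
      exact le_add_of_nonneg_left (by positivity)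

lemma abs_integral_sub_integral_softClamp_le [IsFiniteMeasure μ] {δ : ℝ} (hδ : 0 < δ)
    (hμ : MemLp id 2 μ) :
    |∫ t, t ∂μ - ∫ t, softClamp δ hδ t ∂μ| ≤ δ * ∫ t, t ^ 2 ∂μ := by
  have hid : Integrable (fun t : ℝ => t) μ := hμ.integrable one_le_two
  have hsub := hid.sub ((softClamp δ hδ).integrable μ)
  rw [← integral_sub hid ((softClamp δ hδ).integrable μ), ← integral_const_mul]
  exact abs_integral_le_integral_abs.trans
    (integral_mono hsub.abs (hμ.integrable_sq.const_mul δ) (abs_sub_div_one_add_le hδ.le))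

lemma abs_average_sub_average_softClamp_le {p : ℕ} (x : Fin p → ℝ) {δ : ℝ} (hδ : 0 < δ) :
    |(∑ i, x i) / p - (∑ i, softClamp δ hδ (x i)) / p| ≤ δ * ((∑ i, x i ^ 2) / p) := by
  rw [← sub_div, ← sum_sub_distrib, abs_div, Nat.abs_cast, ← mul_div_assoc, mul_sum]
  gcongr
  exact (abs_sum_le_sum_abs _ _).trans
    (sum_le_sum fun i _ => abs_sub_div_one_add_le hδ.le (x i))

/-- Boundedness of the second moments makes the sequence uniformly integrable. -/
lemma EmpConverges.tendsto_average [IsFiniteMeasure μ] (hx : EmpConverges x μ)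
    (hμ : MemLp id 2 μ)
    (hx2 : Tendsto (fun p => (∑ i, x p i ^ 2) / (p : ℝ)) atTop (𝓝 (∫ t, t ^ 2 ∂μ))) :
    Tendsto (fun p => (∑ i, x p i) / (p : ℝ)) atTop (𝓝 (∫ t, t ∂μ)) := by
  refine Metric.tendsto_nhds.2 fun ε hε => ?_
  set m := ∫ t, t ^ 2 ∂μ
  have hm : 0 ≤ m := integral_nonneg fun t => sq_nonneg t
  let δ := ε / (3 * (m + 1))
  have hδ : 0 < δ := by positivity
  have hδm : δ * (m + 1) = ε / 3 := by simp only [δ]; field_simp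
  filter_upwards [Metric.tendsto_nhds.1 (hx (softClamp δ hδ)) (ε / 3) (by positivity),
    hx2.eventually (gt_mem_nhds (lt_add_one m))] with p hclamp hsq
  have hp := abs_average_sub_average_softClamp_le (x p) hδ
  have hlim := abs_integral_sub_integral_softClamp_le hδ hμ
  rw [← Real.dist_eq] at hp hlim
  rw [dist_comm] at hlim
  calc dist ((∑ i, x p i) / (p : ℝ)) (∫ t, t ∂μ)
      ≤ dist ((∑ i, x p i) / (p : ℝ)) ((∑ i, softClamp δ hδ (x p i)) / p)
        + dist ((∑ i, softClamp δ hδ (x p i)) / (p : ℝ)) (∫ t, softClamp δ hδ t ∂μ)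
        + dist (∫ t, softClamp δ hδ t ∂μ) (∫ t, t ∂μ) := dist_triangle4 _ _ _ _
    _ < δ * (m + 1) + ε / 3 + δ * (m + 1) := by
        have hsq' := mul_lt_mul_of_pos_left hsq hδ
        linarith [mul_lt_mul_of_pos_left (lt_add_one m) hδ]
    _ = ε := by rw [hδm]; ring

end FirstMoment

section Noise

variable {α : Type*} [MeasurableSpace α] {γ : Measure α} [IsProbabilityMeasure γ]

lemma integrable_average_pi {p : ℕ} {Y : Fin p → α → ℝ} (hY : ∀ i, Integrable (Y i) γ) :
    Integrable (fun ω => (∑ i, Y i (ω i)) / p) (Measure.pi fun _ : Fin p => γ) :=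
  (integrable_finsetSum _ fun i _ => integrable_comp_eval (hY i)).div_const _

lemma integral_average_pi {p : ℕ} {Y : Fin p → α → ℝ} (hY : ∀ i, Integrable (Y i) γ) :
    ∫ ω, (∑ i, Y i (ω i)) / p ∂Measure.pi (fun _ : Fin p => γ) = (∑ i, ∫ z, Y i z ∂γ) / p := by
  rw [integral_div, integral_finsetSum _ fun i _ => integrable_comp_eval (hY i)]
  congr 1
  exact sum_congr rfl fun i _ => integral_comp_eval (hY i).1

lemma variance_average_le {p : ℕ} {Y : Fin p → α → ℝ} {M : ℝ}
    (hY : ∀ i, AEStronglyMeasurable (Y i) γ) (hM : ∀ i z, |Y i z| ≤ M) :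
    Var[fun ω => (∑ i, Y i (ω i)) / p; Measure.pi fun _ : Fin p => γ] ≤ M ^ 2 / p := by
  have hsum := variance_sum_pi fun i =>
    MemLp.of_bound (p := 2) (hY i) M (.of_forall (hM i))
  simp only [div_eq_mul_inv, variance_mul_const]
  rw [← Finset.sum_fn, hsum]
  calc (∑ i, Var[Y i; γ]) * (p : ℝ)⁻¹ ^ 2 ≤ (∑ _i : Fin p, M ^ 2) * (p : ℝ)⁻¹ ^ 2 := by
        gcongr with i
        refine (variance_le_sq_of_bounded (a := -M) (b := M)
          (.of_forall fun z => abs_le.1 (hM i z)) (hY i).aemeasurable).trans_eq ?_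
        ring
    _ = M ^ 2 * (p : ℝ)⁻¹ := by
        rw [sum_const, card_univ, Fintype.card_fin, nsmul_eq_mul]
        field_simp

lemma integral_abs_average_sub_le {p : ℕ} {Y : Fin p → α → ℝ} {M : ℝ}
    (hY : ∀ i, AEStronglyMeasurable (Y i) γ) (hM : ∀ i z, |Y i z| ≤ M) :
    ∫ ω, |(∑ i, Y i (ω i)) / p - (∑ i, ∫ z, Y i z ∂γ) / p| ∂Measure.pi (fun _ : Fin p => γ)
      ≤ √(M ^ 2 / p) := by
  set P := Measure.pi fun _ : Fin p => γ
  have hmem (i : Fin p) : MemLp (Y i) 2 γ := .of_bound (hY i) M (.of_forall (hM i))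
  have havg : MemLp (fun ω : Fin p → α => (∑ i, Y i (ω i)) / p) 2 P := by
    simp only [div_eq_mul_inv]
    exact (memLp_finsetSum univ fun i _ =>
      (hmem i).comp_measurePreserving (measurePreserving_eval _ i)).mul_const _
  refine (integral_abs_le_sqrt_integral_sq (havg.sub (memLp_const _))).trans (Real.sqrt_le_sqrt ?_)
  have hvar := variance_average_le hY hM
  rwa [variance_eq_integral havg.1.aemeasurable,
    integral_average_pi fun i => (hmem i).integrable one_le_two] at hvar

/-- The expectation of `f (g + b)` as a bounded continuous function of `b`. -/
noncomputable def noiseAverage (γ : Measure α) [IsProbabilityMeasure γ] {g : α → ℝ}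
    (hg : AEStronglyMeasurable g γ) (f : BoundedContinuousFunction ℝ ℝ) :
    BoundedContinuousFunction ℝ ℝ :=
  .ofNormedAddCommGroup (fun b => ∫ z, f (g z + b) ∂γ)
    (continuous_of_dominated
      (fun _ => f.continuous.comp_aestronglyMeasurable (hg.add aestronglyMeasurable_const))
      (fun _ => .of_forall fun _ => f.norm_coe_le_norm _) (integrable_const ‖f‖)
      (.of_forall fun _ => by fun_prop))
    ‖f‖ fun _ => by
      simpa using norm_integral_le_of_norm_le_const (μ := γ)
        (.of_forall fun _ => f.norm_coe_le_norm _)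

lemma integral_conv_map {μ : Measure ℝ} [IsProbabilityMeasure μ] {g : α → ℝ}
    (hg : AEMeasurable g γ) {f : ℝ → ℝ} (hf : Continuous f)
    (hfint : Integrable f (μ ∗ γ.map g)) :
    ∫ t, f t ∂(μ ∗ γ.map g) = ∫ b, ∫ z, f (g z + b) ∂γ ∂μ := by
  have := Measure.isProbabilityMeasure_map hg
  rw [integral_conv hfint]
  refine integral_congr_ae (.of_forall fun b => ?_)
  simp only [add_comm b]
  exact integral_map hg (by fun_prop)

lemma memLp_id_conv {μ ν : Measure ℝ} [IsProbabilityMeasure μ] [IsProbabilityMeasure ν]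
    {q : ENNReal} (hμ : MemLp id q μ) (hν : MemLp id q ν) : MemLp id q (μ ∗ ν) :=
  (memLp_map_measure_iff aestronglyMeasurable_id (by fun_prop)).2
    ((hμ.comp_measurePreserving measurePreserving_fst).add
      (hν.comp_measurePreserving measurePreserving_snd))

lemma integral_add_const_sq {g : α → ℝ} (hg : MemLp g 2 γ) (b : ℝ) :
    ∫ z, (g z + b) ^ 2 ∂γ = ∫ z, g z ^ 2 ∂γ + 2 * (∫ z, g z ∂γ) * b + b ^ 2 := by
  have hlin : Integrable (fun z => 2 * g z * b) γ :=
    ((hg.integrable one_le_two).const_mul 2).mul_const b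
  have hquad : Integrable (fun z => g z ^ 2 + 2 * g z * b) γ := hg.integrable_sq.add hlin
  simp only [add_sq]
  rw [integral_add hquad (integrable_const _),
    integral_add hg.integrable_sq hlin, integral_mul_const, integral_const_mul, integral_const,
    probReal_univ, one_smul]

lemma tendstoInMean_average_noise {x : ∀ p : ℕ, Fin p → ℝ} {μ : Measure ℝ}
    [IsProbabilityMeasure μ] (hx : EmpConverges x μ) {g : α → ℝ} (hg : AEStronglyMeasurable g γ)
    (f : BoundedContinuousFunction ℝ ℝ) :
    TendstoInMean (fun p => Measure.pi fun _ : Fin p => γ)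
      (fun p ω => (∑ i, f (g (ω i) + x p i)) / (p : ℝ)) atTop
      (∫ t, f t ∂(μ ∗ γ.map g)) := by
  have := Measure.isProbabilityMeasure_map hg.aemeasurable
  have hmeas (b : ℝ) : AEStronglyMeasurable (fun z => f (g z + b)) γ :=
    f.continuous.comp_aestronglyMeasurable (hg.add aestronglyMeasurable_const)
  have hint (b : ℝ) : Integrable (fun z => f (g z + b)) γ :=
    .of_bound (hmeas b) ‖f‖ (.of_forall fun _ => f.norm_coe_le_norm _)
  have hlim : Tendsto (fun p => (∑ i, ∫ z, f (g z + x p i) ∂γ) / (p : ℝ)) atTop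
      (𝓝 (∫ t, f t ∂(μ ∗ γ.map g))) := by
    rw [integral_conv_map hg.aemeasurable f.continuous (f.integrable _)]
    exact hx (noiseAverage γ hg f)
  have hr : Tendsto (fun p : ℕ => √(‖f‖ ^ 2 / p)) atTop (𝓝 0) := by
    simpa only [Real.sqrt_zero] using (tendsto_const_div_atTop_nhds_zero_nat (‖f‖ ^ 2)).sqrt
  have hdev : TendstoInMean (fun p => Measure.pi fun _ : Fin p => γ)
      (fun p ω => (∑ i, f (g (ω i) + x p i)) / (p : ℝ)
        - (∑ i, ∫ z, f (g z + x p i) ∂γ) / (p : ℝ)) atTop 0 := by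
    refine .of_eventually_le (.of_forall fun p => ?_) hr (.of_forall fun p => ?_)
    · exact (integrable_average_pi fun i => hint (x p i)).sub (integrable_const _)
    · simpa only [sub_zero] using integral_abs_average_sub_le (fun i => hmeas (x p i))
        fun i z => f.norm_coe_le_norm (g z + x p i)
  simpa using hdev.sub_deterministic hlim.neg

lemma integral_average_noise_sq {p : ℕ} (hp : p ≠ 0) (x : Fin p → ℝ) {g : α → ℝ}
    (hg : MemLp g 2 γ) :
    ∫ ω, (∑ i, (g (ω i) + x i) ^ 2) / p ∂Measure.pi (fun _ : Fin p => γ) =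
      ∫ z, g z ^ 2 ∂γ + 2 * (∫ z, g z ∂γ) * ((∑ i, x i) / p) + (∑ i, x i ^ 2) / p := by
  rw [integral_average_pi (Y := fun i z => (g z + x i) ^ 2) fun i =>
    (hg.add (memLp_const (x i))).integrable_sq]
  simp only [integral_add_const_sq hg, sum_add_distrib, ← mul_sum, sum_const, card_univ,
    Fintype.card_fin, nsmul_eq_mul]
  field_simp

lemma integral_sq_conv_map {μ : Measure ℝ} [IsProbabilityMeasure μ] (hμ : MemLp id 2 μ)
    {g : α → ℝ} (hg : MemLp g 2 γ) (hconv : MemLp id 2 (μ ∗ γ.map g)) :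
    ∫ t, t ^ 2 ∂(μ ∗ γ.map g) =
      ∫ z, g z ^ 2 ∂γ + 2 * (∫ z, g z ∂γ) * ∫ t, t ∂μ + ∫ t, t ^ 2 ∂μ := by
  have hlin : Integrable (fun t => 2 * (∫ z, g z ∂γ) * t) μ :=
    (hμ.integrable one_le_two).const_mul _
  have haff : Integrable (fun t => ∫ z, g z ^ 2 ∂γ + 2 * (∫ z, g z ∂γ) * t) μ :=
    (integrable_const _).add hlin
  have hsq : Integrable (fun t : ℝ => t ^ 2) μ := hμ.integrable_sq
  rw [integral_conv_map hg.1.aemeasurable (continuous_pow 2) hconv.integrable_sq]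
  simp only [integral_add_const_sq hg]
  rw [integral_add haff hsq, integral_add (integrable_const _) hlin,
    integral_const_mul, integral_const, probReal_univ, one_smul]

lemma empConvergesInMean_noise {x : ∀ p : ℕ, Fin p → ℝ} {μ : Measure ℝ}
    [IsProbabilityMeasure μ] (hx : EmpConverges x μ) (hμ : MemLp id 2 μ)
    (hx2 : Tendsto (fun p => (∑ i, x p i ^ 2) / (p : ℝ)) atTop (𝓝 (∫ t, t ^ 2 ∂μ)))
    {g : α → ℝ} (hg : MemLp g 2 γ) :
    EmpConvergesInMean (fun p => Measure.pi fun _ : Fin p => γ) (fun p ω i => g (ω i) + x p i)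
      (μ ∗ γ.map g) := by
  have := Measure.isProbabilityMeasure_map hg.1.aemeasurable
  have hconv : MemLp id 2 (μ ∗ γ.map g) :=
    memLp_id_conv hμ ((memLp_map_measure_iff aestronglyMeasurable_id hg.1.aemeasurable).2 hg)
  refine ⟨fun p => .of_eval fun i => ?_, hconv, tendstoInMean_average_noise hx hg.1, ?_⟩
  · exact (hg.comp_measurePreserving (measurePreserving_eval _ i)).add (memLp_const _)
  rw [integral_sq_conv_map hμ hg hconv]
  refine Tendsto.congr' ?_
    ((((hx.tendsto_average hμ hx2).const_mul (2 * ∫ z, g z ∂γ)).const_add _).add hx2)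
  filter_upwards [eventually_ne_atTop 0] with p hp
  exact (integral_average_noise_sq hp (x p) hg).symm

end Noise

/-! ### The limit of the normalised Moreau envelopes -/

theorem statement18_general (γ : Measure ℝ) [IsProbabilityMeasure γ] (hγ : MemLp id 2 γ)
    (β lam : (p : ℕ) → Fin p → ℝ) (μβ μlam : Measure ℝ)
    [IsProbabilityMeasure μβ] [IsProbabilityMeasure μlam]
    (hβconv : EmpConverges β μβ) (hlamconv : EmpConverges lam μlam)
    (hlam_nonneg : ∀ p i, 0 ≤ lam p i) (hlam_mono : ∀ p, Monotone (lam p))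
    (hβmem : MemLp id 2 μβ)
    (hβ2 : Tendsto (fun p => (∑ i, (β p i) ^ 2) / (p : ℝ)) atTop (𝓝 (∫ t, t ^ 2 ∂μβ)))
    (hlammem : MemLp id 2 μlam)
    (hlam2 : Tendsto (fun p => (∑ i, (lam p i) ^ 2) / (p : ℝ)) atTop (𝓝 (∫ t, t ^ 2 ∂μlam)))
    (c τ : ℝ) (hτ : 0 < τ) :
    ∃ F : ℝ,
      Tendsto (fun p =>
        (∫ h, (moreauJ (lam p) (fun i => c * h i + β p i) τ - sortedL1 (lam p) (β p))
          ∂Measure.pi fun _ : Fin p => γ) / (p : ℝ)) atTop (𝓝 F) ∧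
      ∀ ε : ℝ, 0 < ε →
        Tendsto (fun p => (Measure.pi fun _ : Fin p => γ)
          {h : Fin p → ℝ |
            ε ≤ |(moreauJ (lam p) (fun i => c * h i + β p i) τ
              - sortedL1 (lam p) (β p)) / (p : ℝ) - F|})
          atTop (𝓝 0) := by
  have hX := empConvergesInMean_noise hβconv hβmem hβ2 (hγ.const_mul c)
  obtain ⟨l, hl⟩ := exists_tendsto_stepL2_sortedAbs hlamconv hlammem hlam2
  simp only [sortedAbs_eq_self (hlam_mono _) (hlam_nonneg _)] at hl
  have := Measure.isProbabilityMeasure_map (hγ.const_mul c).1.aemeasurable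
  obtain ⟨a, ha⟩ := exists_tendstoInMean_moreauJ_div hX hlam_nonneg hl hτ
  obtain ⟨b, hb⟩ := exists_tendsto_sortedL1_div hβconv hβmem hβ2 hl
  have hF := ha.sub_deterministic hb
  simp only [← sub_div] at hF
  refine ⟨a - b, ?_, fun ε hε => hF.tendsto_measure_le_abs_sub hε⟩
  simpa only [integral_div, id] using hF.tendsto_integral

theorem statement18
    (β lam : (p : ℕ) → Fin p → ℝ)
    (μβ μlam : Measure ℝ)
    (hμβ : IsProbabilityMeasure μβ) (hμlam : IsProbabilityMeasure μlam)
    (hβconv : EmpConverges β μβ) (hlamconv : EmpConverges lam μlam)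
    (hlam_nonneg : ∀ p i, 0 ≤ lam p i) (hlam_mono : ∀ p, Monotone (lam p))
    (hβ2int : Integrable (fun t => t ^ 2) μβ)
    (hβ2 : Tendsto (fun p => (∑ i, (β p i) ^ 2) / (p : ℝ)) atTop (𝓝 (∫ t, t ^ 2 ∂μβ)))
    (hlam2int : Integrable (fun t => t ^ 2) μlam)
    (hlam2 : Tendsto (fun p => (∑ i, (lam p i) ^ 2) / (p : ℝ))
      atTop (𝓝 (∫ t, t ^ 2 ∂μlam))) :
    ∀ c τ : ℝ, 0 < τ →
      ∃ F : ℝ,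
        Tendsto (fun p =>
          (∫ h, (moreauJ (lam p) (fun i => c * h i + β p i) τ - sortedL1 (lam p) (β p))
            ∂gaussPi p) / (p : ℝ)) atTop (𝓝 F) ∧
        ∀ ε : ℝ, 0 < ε →
          Tendsto (fun p => gaussPi p
            {h : Fin p → ℝ |
              ε ≤ |(moreauJ (lam p) (fun i => c * h i + β p i) τ
                - sortedL1 (lam p) (β p)) / (p : ℝ) - F|})
            atTop (𝓝 0) := by
  have hsq {μ : Measure ℝ} (hμ : Integrable (fun t => t ^ 2) μ) : MemLp id 2 μ :=
    (memLp_two_iff_integrable_sq aestronglyMeasurable_id).2 hμ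
  exact statement18_general (gaussianReal 0 1) (memLp_id_gaussianReal' 2 (by simp)) β lam μβ μlam
    hβconv hlamconv hlam_nonneg hlam_mono (hsq hβ2int) hβ2 (hsq hlam2int) hlam2
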